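/- Let n be an even positive integer, F a finite field with characteristic coprime to n, g(X) of degree < n and g'(X) of degree < n/2 over F. Let C_{g,g'} = { (f·g mod X^n − 1, f·g' mod X^{n/2} − 1) : f ∈ F[X] } ⊆ F^n × F^{n/2}, viewed as an F-linear subspace of F^{3n/2}. Then dim_F C_{g,g'} = n − deg[gcd(g(X), X^{n/2} + 1) · gcd(g(X), g'(X), X^{n/2} − 1)]. -/

import Mathlib

open Polynomial Matrix

/-- The monic polynomial associated to `p` (and `0` for `p = 0`). -/
noncomputable def monicize {F : Type*} [Field F] (p : Polynomial F) : Polynomial F :=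
  Polynomial.C p.leadingCoeff⁻¹ * p

/-- The monic greatest common divisor of two polynomials over a field. -/
noncomputable def pgcd {F : Type*} [Field F] (p q : Polynomial F) : Polynomial F :=
  letI := Classical.decEq F
  monicize (EuclideanDomain.gcd p q)

/-- The monic least common multiple of two polynomials over a field. -/
noncomputable def plcm {F : Type*} [Field F] (p q : Polynomial F) : Polynomial F :=
  letI := Classical.decEq F
  monicize (EuclideanDomain.lcm p q)

/-- Generalized circulant matrix: `(i,k)`-entry is `g_{(k-i) mod n}`. -/
def circMat (F : Type*) [Field F] (m n : ℕ) (g : Polynomial F) :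
    Matrix (Fin m) (Fin n) F :=
  Matrix.of fun i k => g.coeff ((k.1 + (n - 1) * i.1) % n)

/-!
The map `f ↦ (f * g mod X ^ n - 1, f * g' mod X ^ (n / 2) - 1)` has image `C_{g,g'}`, so its kernel
determines the dimension. As `2` is invertible, `X ^ n - 1` is the product of the coprime factors
`P = X ^ (n / 2) - 1` and `Q = X ^ (n / 2) + 1`, and `f` lies in the kernel iff `Q ∣ f * g` and
`P` divides both `f * g` and `f * g'`. These conditions say that `Q / gcd(g, Q)` and
`P / gcd(g, g', P)` divide `f`, so the kernel is the ideal generated by the product of these two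
coprime cofactors, whose degree is the codimension of the kernel.
-/

section GCD

variable {F : Type*} [Field F] {d p q f : F[X]}

theorem associated_monicize (p : F[X]) : Associated (monicize p) p := by
  rcases eq_or_ne p 0 with rfl | hp
  · simp [monicize]
  · have hu : IsUnit (C p.leadingCoeff⁻¹) :=
      isUnit_C.2 (inv_ne_zero (leadingCoeff_ne_zero.2 hp)).isUnit
    exact associated_unit_mul_left p _ hu

theorem dvd_mul_pgcd_iff : d ∣ f * pgcd p q ↔ d ∣ f * p ∧ d ∣ f * q := by
  let := Classical.decEq F
  let := EuclideanDomain.gcdMonoid F[X]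
  have hgcd : Associated (pgcd p q) (gcd p q) := associated_monicize _
  rw [(hgcd.mul_left f).dvd_iff_dvd_right, ← (gcd_mul_left' f p q).dvd_iff_dvd_right, dvd_gcd_iff]

theorem pgcd_dvd_right (p q : F[X]) : pgcd p q ∣ q := by
  simpa only [one_mul] using (dvd_mul_pgcd_iff.1 (dvd_refl (1 * pgcd p q))).2

theorem dvd_mul_pgcd_self_iff : d ∣ f * pgcd p d ↔ d ∣ f * p := by
  rw [dvd_mul_pgcd_iff, and_iff_left (dvd_mul_left d f)]

end GCD

section Divisibility

theorem dvd_mul_iff_of_eq_mul {M : Type*} [CommMonoidWithZero M] [IsCancelMulZero M]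
    {q d a f : M} (hq : q ≠ 0) (hqa : q = d * a) : q ∣ f * d ↔ a ∣ f := by
  subst hqa
  rw [mul_comm d a, mul_dvd_mul_iff_right (left_ne_zero_of_mul hq)]

theorem mul_dvd_iff_of_isCoprime {R : Type*} [CommSemiring R] {p q f : R} (hpq : IsCoprime p q) :
    p * q ∣ f ↔ p ∣ f ∧ q ∣ f :=
  ⟨fun h ↦ ⟨dvd_of_mul_right_dvd h, dvd_of_mul_left_dvd h⟩, fun h ↦ hpq.mul_dvd h.1 h.2⟩

theorem isCoprime_sub_one_add_one {R : Type*} [CommRing R] (h2 : IsUnit (2 : R)) (a : R) :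
    IsCoprime (a - 1) (a + 1) := by
  obtain ⟨b, hb⟩ := h2.exists_left_inv
  exact ⟨-b, b, by linear_combination hb⟩

end Divisibility

section ResidueVector

theorem toFn_eq_zero_iff {R : Type*} [Semiring R] {k : ℕ} {p : R[X]} (hp : p.degree < k) :
    toFn k p = 0 ↔ p = 0 :=
  degreeLTEquiv_eq_zero_iff_eq_zero (mem_degreeLT.2 hp)

variable {R : Type*} [CommRing R]

/-- The linear map sending `f` to the first `k` coefficients of `(f * g) mod q`. When
`q.natDegree ≤ k` this vector represents the whole residue. -/
noncomputable def residueVector (k : ℕ) (q g : R[X]) : R[X] →ₗ[R] (Fin k → R) :=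
  toFn k ∘ₗ modByMonicHom q ∘ₗ LinearMap.mulRight R g

theorem mem_ker_residueVector {k : ℕ} {q f : R[X]} (g : R[X]) (hq : q.Monic)
    (hk : q.natDegree ≤ k) : f ∈ LinearMap.ker (residueVector k q g) ↔ q ∣ f * g := by
  nontriviality R
  have hdeg : (f * g %ₘ q).degree < k :=
    (degree_modByMonic_lt _ hq).trans_le (natDegree_le_iff_degree_le.1 hk)
  exact (toFn_eq_zero_iff hdeg).trans (modByMonic_eq_zero_iff_dvd hq)

end ResidueVector

section CoprimeModuli

variable {F : Type*} [Field F]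

theorem finrank_range_eq_natDegree_of_mem_ker_iff_dvd {V : Type*} [AddCommGroup V] [Module F V]
    (φ : F[X] →ₗ[F] V) (h : F[X]) (hker : ∀ f, f ∈ LinearMap.ker φ ↔ h ∣ f) :
    Module.finrank F (LinearMap.range φ) = h.natDegree := by
  have hspan : LinearMap.ker φ = (Ideal.span {h}).restrictScalars F :=
    Submodule.ext fun f ↦ (hker f).trans Ideal.mem_span_singleton.symm
  rw [← φ.quotKerEquivRange.finrank_eq, hspan]
  exact finrank_quotient_span_eq_natDegree

theorem mul_dvd_mul_and_dvd_mul_iff {P Q a b f g g' : F[X]} (hPQ : IsCoprime P Q) (hP : P ≠ 0)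
    (hQ : Q ≠ 0) (hb : P = pgcd g (pgcd g' P) * b) (ha : Q = pgcd g Q * a) :
    P * Q ∣ f * g ∧ P ∣ f * g' ↔ b * a ∣ f := by
  have hmodQ : Q ∣ f * g ↔ a ∣ f :=
    dvd_mul_pgcd_self_iff.symm.trans (dvd_mul_iff_of_eq_mul hQ ha)
  have hmodP : P ∣ f * g ∧ P ∣ f * g' ↔ b ∣ f := by
    rw [← dvd_mul_pgcd_self_iff (p := g'), ← dvd_mul_pgcd_iff, dvd_mul_iff_of_eq_mul hP hb]
  have hba : IsCoprime b a := hPQ.mono (Dvd.intro_left _ hb.symm) (Dvd.intro_left _ ha.symm)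
  rw [mul_dvd_iff_of_isCoprime hPQ, mul_dvd_iff_of_isCoprime hba, ← hmodP, ← hmodQ, and_right_comm]

theorem finrank_range_residueVector_prod {P Q : F[X]} (hP : P.Monic) (hQ : Q.Monic)
    (hPQ : IsCoprime P Q) {k l : ℕ} (hk : (P * Q).natDegree ≤ k) (hl : P.natDegree ≤ l)
    (g g' : F[X]) :
    Module.finrank F
        (LinearMap.range ((residueVector k (P * Q) g).prod (residueVector l P g'))) =
      (P * Q).natDegree - (pgcd g Q * pgcd g (pgcd g' P)).natDegree := by
  have hker (f : F[X]) :
      f ∈ LinearMap.ker ((residueVector k (P * Q) g).prod (residueVector l P g')) ↔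
        P * Q ∣ f * g ∧ P ∣ f * g' := by
    rw [LinearMap.ker_prod, Submodule.mem_inf, mem_ker_residueVector g (hP.mul hQ) hk,
      mem_ker_residueVector g' hP hl]
  obtain ⟨a, ha⟩ : pgcd g Q ∣ Q := pgcd_dvd_right g Q
  obtain ⟨b, hb⟩ : pgcd g (pgcd g' P) ∣ P := (pgcd_dvd_right g _).trans (pgcd_dvd_right g' P)
  have hcofactors : P * Q = pgcd g Q * pgcd g (pgcd g' P) * (b * a) := by
    linear_combination Q * hb + pgcd g (pgcd g' P) * b * ha
  have hne := hcofactors ▸ mul_ne_zero hP.ne_zero hQ.ne_zero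
  have hdeg : (P * Q).natDegree =
      (pgcd g Q * pgcd g (pgcd g' P)).natDegree + (b * a).natDegree := by
    rw [hcofactors, natDegree_mul (left_ne_zero_of_mul hne) (right_ne_zero_of_mul hne)]
  have hrange := finrank_range_eq_natDegree_of_mem_ker_iff_dvd _ (b * a) fun f ↦
    (hker f).trans (mul_dvd_mul_and_dvd_mul_iff hPQ hP.ne_zero hQ.ne_zero hb ha)
  rw [hrange, hdeg, Nat.add_sub_cancel_left]

end CoprimeModuli

theorem stmt_17_general (F : Type*) [Field F] (h2 : (2 : F) ≠ 0)
    (n : ℕ) (hn : 0 < n) (hev : Even n) (g g' : Polynomial F) :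
    Module.finrank F
      (Submodule.span F
        (Set.range (fun f : Polynomial F =>
          ((fun k : Fin n => ((f * g) %ₘ (X ^ n - 1)).coeff k,
            fun k : Fin (n / 2) => ((f * g') %ₘ (X ^ (n / 2) - 1)).coeff k) :
            (Fin n → F) × (Fin (n / 2) → F)))))
      = n - (pgcd g (X ^ (n / 2) + 1) * pgcd g (pgcd g' (X ^ (n / 2) - 1))).natDegree := by
  have hm : n / 2 ≠ 0 := by have := hev.two_dvd; omega
  have hfactor : (X ^ n - 1 : F[X]) = (X ^ (n / 2) - 1) * (X ^ (n / 2) + 1) := by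
    conv_lhs => rw [← Nat.div_two_mul_two_of_even hev]
    ring
  have hcoprime : IsCoprime (X ^ (n / 2) - 1 : F[X]) (X ^ (n / 2) + 1) :=
    isCoprime_sub_one_add_one (by simpa only [map_ofNat] using isUnit_C.2 h2.isUnit) _
  have hdeg (k : ℕ) : (X ^ k - 1 : F[X]).natDegree = k := natDegree_X_pow_sub_C
  have hdim := finrank_range_residueVector_prod (monic_X_pow_sub_C 1 hm) (monic_X_pow_add_C 1 hm)
    hcoprime (hfactor ▸ (hdeg n).le) (hdeg (n / 2)).le g g'
  rw [map_one, ← hfactor, hdeg n] at hdim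
  rw [← hdim, ← Submodule.span_eq (LinearMap.range _)]
  rfl

theorem stmt_17 (F : Type*) [Field F] [Fintype F]
    (n : ℕ) (hn : 0 < n) (hev : Even n)
    (hchar : Nat.Coprime (ringChar F) n)
    (g g' : Polynomial F) (hg : g.degree < n) (hg' : g'.degree < (n / 2 : ℕ)) :
    Module.finrank F
      (Submodule.span F
        (Set.range (fun f : Polynomial F =>
          ((fun k : Fin n => ((f * g) %ₘ (X ^ n - 1)).coeff k,
            fun k : Fin (n / 2) => ((f * g') %ₘ (X ^ (n / 2) - 1)).coeff k) :
            (Fin n → F) × (Fin (n / 2) → F)))))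
      = n - (pgcd g (X ^ (n / 2) + 1) * pgcd g (pgcd g' (X ^ (n / 2) - 1))).natDegree := by
  have h2 : ringChar F ≠ 2 := fun h ↦
    Nat.not_even_iff_odd.2 (Nat.coprime_two_left.1 (h ▸ hchar)) hev
  exact stmt_17_general F (Ring.two_ne_zero h2) n hn hev g g'
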